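/- Let d = 3. For every integer n ≥ 2, the number of generalized linear diagrams of order (n,3) having exactly 2 loops lying in two distinct blocks equals 2 · Σ_{m=0}^{4} Σ_{j=0}^{1} Σ_{s=0}^{min(m, 2−j)} C(m, s) · C(3(n−2)+1−m, 2−j−s) · C(3(n−2)+3−m−j+s, 2−m−j+s) · a(n−2,m). -/

import Mathlib

/-- A generalized linear diagram on points `1,…,N` whose blocks all have size `d`:
a partition of `{1,…,N}` into blocks of size `d`. -/
def IsLinearDiagram (N d : ℕ) (P : Finset (Finset ℕ)) : Prop :=
  (∀ b ∈ P, b.card = d) ∧ (∀ b ∈ P, ∀ x ∈ b, x ∈ Finset.Icc 1 N) ∧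
    ∀ x ∈ Finset.Icc 1 N, ∃! b : Finset ℕ, b ∈ P ∧ x ∈ b

/-- The number of loops of a linear diagram on points `1,…,N`: indices `i` with
`1 ≤ i ≤ N - 1` such that `i` and `i + 1` lie in the same block. -/
noncomputable def linLoops (N : ℕ) (P : Finset (Finset ℕ)) : ℕ :=
  Set.ncard {i : ℕ | 1 ≤ i ∧ i + 1 ≤ N ∧ ∃ b ∈ P, i ∈ b ∧ i + 1 ∈ b}

/-- `numA d n k` : the number of generalized linear diagrams of order `(n,d)`
with exactly `k` loops. -/
noncomputable def numA (d n k : ℕ) : ℕ :=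
  Set.ncard {P : Finset (Finset ℕ) | IsLinearDiagram (n * d) d P ∧ linLoops (n * d) P = k}

/-- `numA` with an integer loop index, zero for negative indices. -/
noncomputable def numAZ (d n : ℕ) (k : ℤ) : ℕ :=
  if 0 ≤ k then numA d n k.toNat else 0

/-- Binomial coefficient with integer arguments: `0` when `y < 0` or `y > x`. -/
def iChoose (x y : ℤ) : ℕ :=
  if 0 ≤ y ∧ y ≤ x then x.toNat.choose y.toNat else 0

/-- A generalized chord diagram on `ZMod N` whose blocks all have size `d`:
a partition of `ZMod N` into blocks of size `d`. -/
def IsChordDiagram (N d : ℕ) (P : Finset (Finset (ZMod N))) : Prop :=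
  (∀ b ∈ P, b.card = d) ∧ ∀ x : ZMod N, ∃! b : Finset (ZMod N), b ∈ P ∧ x ∈ b

/-- A chord diagram is loopless if no residues `i`, `i+1` lie in the same block. -/
def ChordLoopless (N : ℕ) (P : Finset (Finset (ZMod N))) : Prop :=
  ∀ i : ZMod N, ∀ b ∈ P, i ∈ b → i + 1 ∈ b → False

/-- `numB d n` : the number of loopless generalized chord diagrams of order `(n,d)`. -/
noncomputable def numB (d n : ℕ) : ℕ :=
  Set.ncard {P : Finset (Finset (ZMod (n * d))) |
    IsChordDiagram (n * d) d P ∧ ChordLoopless (n * d) P}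

/-- The shift `i ↦ i + v` modulo `M`, on the representatives `1,…,M`. -/
def shiftMod (M v i : ℕ) : ℕ := if i + v ≤ M then i + v else i + v - M

/-- An `m`-symmetric linear diagram with sector size `v` and blocks of size `d`:
a partition of `{1,…,m·v}` into blocks of size `d` invariant under the shift by `v`
modulo `m·v`. -/
def IsMSymLinear (d m v : ℕ) (P : Finset (Finset ℕ)) : Prop :=
  IsLinearDiagram (m * v) d P ∧ ∀ b ∈ P, b.image (shiftMod (m * v) v) ∈ P

/-- The number of loops lying in sector `s` (sectors numbered from `0`):
indices `i` with `s·v + 1 ≤ i ≤ (s+1)·v - 1` such that `i` and `i + 1` lie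
in the same block. -/
noncomputable def sectorLoops (v : ℕ) (P : Finset (Finset ℕ)) (s : ℕ) : ℕ :=
  Set.ncard {i : ℕ | s * v + 1 ≤ i ∧ i + 1 ≤ (s + 1) * v ∧ ∃ b ∈ P, i ∈ b ∧ i + 1 ∈ b}

/-- `numAtil d m v k` : the number of `m`-symmetric linear diagrams with sector size `v`,
blocks of size `d`, and exactly `k` loops in each sector (`ã(v,k;m,d)`). -/
noncomputable def numAtil (d m v k : ℕ) : ℕ :=
  Set.ncard {P : Finset (Finset ℕ) |
    IsMSymLinear d m v P ∧ ∀ s < m, sectorLoops v P s = k}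

/-!
Delete a block `b` of size `d` from a diagram and relabel the remaining points. If `b` has `k`
loops, then it meets `d - k` of the gaps of the smaller diagram, and breaks exactly the loops of
that diagram which sit in those gaps. Conversely, a set of `d - k` gaps is met in this way by
`C(d - 1, k)` blocks, the number of compositions of `d` into `d - k` parts. Hence the numbers of
loops before and after a deletion are governed by binomial coefficients.

A diagram whose two loops lie in distinct blocks has two blocks with one loop. Delete one of them:
the other loop survives among the loops of the smaller diagram, all the others having been broken
by the deleted block. So twice the number of diagrams sought is a sum over smaller diagrams with a
marked loop. Delete the block of the marked loop as well, and group the remaining diagrams by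
their number of loops.
-/

open Finset

theorem iChoose_natCast (a b : ℕ) : iChoose a b = a.choose b := by
  unfold iChoose
  split_ifs with h
  · simp
  · rw [Nat.choose_eq_zero_of_lt (by lia)]

theorem iChoose_of_neg (x : ℤ) {y : ℤ} (hy : y < 0) : iChoose x y = 0 :=
  if_neg (by lia)

section Subsets

variable {α : Type*} [DecidableEq α] {A U : Finset α}

theorem card_filter_powersetCard_card_inter (hA : A ⊆ U) (r s : ℕ) :
    #{G ∈ powersetCard r U | #(A ∩ G) = s} = (#A).choose s * iChoose (#U - #A) (r - s) := by
  have hcast : ((#U : ℤ) - #A) = (#(U \ A) : ℕ) := by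
    rw [← card_sdiff_add_card_eq_card hA]; push_cast; ring
  rcases lt_or_ge r s with hrs | hsr
  · rw [iChoose_of_neg _ (by lia), mul_zero, card_eq_zero, filter_eq_empty_iff]
    intro G hG
    have := card_le_card (inter_subset_right : A ∩ G ⊆ G)
    rw [(mem_powersetCard.1 hG).2] at this
    lia
  rw [hcast, ← Nat.cast_sub hsr, iChoose_natCast, ← card_powersetCard, ← card_powersetCard,
    ← card_product]
  refine card_nbij' (fun G => (A ∩ G, G \ A)) (fun B => B.1 ∪ B.2) ?_ ?_ ?_ ?_
  · intro G hG
    simp only [coe_filter, Set.mem_ofPred_eq, mem_powersetCard] at hG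
    obtain ⟨⟨hGU, hGr⟩, hs⟩ := hG
    simp only [coe_product, Set.mem_prod, mem_coe, mem_powersetCard]
    refine ⟨⟨inter_subset_left, hs⟩, sdiff_subset_sdiff hGU subset_rfl, ?_⟩
    rw [card_sdiff, hs, hGr]
  · rintro ⟨B, C⟩ hBC
    simp only [coe_product, Set.mem_prod, mem_coe, mem_powersetCard, subset_sdiff] at hBC
    obtain ⟨⟨hBA, hB⟩, ⟨hCU, hCA⟩, hC⟩ := hBC
    simp only [coe_filter, Set.mem_ofPred_eq, mem_powersetCard]
    refine ⟨⟨union_subset (hBA.trans hA) hCU, ?_⟩, ?_⟩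
    · rw [card_union_of_disjoint (hCA.symm.mono_left hBA)]; lia
    · rw [inter_union_distrib_left, inter_eq_right.2 hBA,
        disjoint_iff_inter_eq_empty.1 hCA.symm, union_empty, hB]
  · intro G _
    simp only [inter_comm A]
    exact sup_inf_sdiff G A
  · rintro ⟨B, C⟩ hBC
    simp only [coe_product, Set.mem_prod, mem_coe, mem_powersetCard, subset_sdiff] at hBC
    obtain ⟨⟨hBA, -⟩, ⟨-, hCA⟩, -⟩ := hBC
    simp only [inter_union_distrib_left, inter_eq_right.2 hBA,
      disjoint_iff_inter_eq_empty.1 hCA.symm, union_empty, union_sdiff_distrib,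
      sdiff_eq_empty_iff_subset.2 hBA, empty_union, sdiff_eq_self_of_disjoint hCA]

theorem sum_powersetCard_card_inter (hA : A ⊆ U) (r : ℕ) (f : ℕ → ℕ) :
    ∑ G ∈ powersetCard r U, f #(A ∩ G) =
      ∑ s ∈ range (#A + 1), (#A).choose s * iChoose (#U - #A) (r - s) * f s := by
  have hmaps : ∀ G ∈ powersetCard r U, #(A ∩ G) ∈ range (#A + 1) := fun G _ =>
    mem_range_succ_iff.2 (card_le_card inter_subset_left)
  rw [← sum_fiberwise_of_maps_to hmaps]
  refine sum_congr rfl fun s _ => ?_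
  rw [← card_filter_powersetCard_card_inter hA, ← smul_eq_mul]
  exact sum_eq_card_nsmul fun G hG => by rw [(mem_filter.1 hG).2]

theorem card_filter_powersetCard_insert {x : α} (hx : x ∉ U) (c : ℕ) (p : Finset α → Prop)
    [DecidablePred p] :
    #{b ∈ powersetCard (c + 1) (insert x U) | p b} =
      #{b ∈ powersetCard (c + 1) U | p b} + #{b ∈ powersetCard c U | p (insert x b)} := by
  have hx' : ∀ {b r}, b ∈ powersetCard r U → x ∉ b := fun hb h => hx ((mem_powersetCard.1 hb).1 h)
  rw [powersetCard_succ_insert hx, filter_union, card_union_of_disjoint, filter_image,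
    card_image_of_injOn]
  · intro b hb b' hb' h
    exact insert_erase_invOn.2.injOn (hx' (mem_filter.1 hb).1) (hx' (mem_filter.1 hb').1) h
  · refine disjoint_filter_filter (disjoint_left.2 fun b hb hb' => hx' hb ?_)
    obtain ⟨_, _, rfl⟩ := mem_image.1 hb'
    exact mem_insert_self ..

end Subsets

section Blocks

theorem infinite_setOf_notMem (b : Finset ℕ) : (Set.ofPred (· ∉ b)).Infinite :=
  b.finite_toSet.infinite_compl

/-- The loops lying in the block `b`. -/
def blockLoops (b : Finset ℕ) : Finset ℕ := {i ∈ b | i + 1 ∈ b}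

/-- The increasing enumeration of the points outside `b`. For `b ⊆ {1,…,N+c}` of size `c` it
relabels the points `1,…,N` of a smaller diagram by the points of `{1,…,N+c} \ b`. -/
noncomputable def outside (b : Finset ℕ) : ℕ ↪o ℕ :=
  OrderEmbedding.ofStrictMono (Nat.nth (· ∉ b)) <|
    Nat.nth_strictMono (infinite_setOf_notMem b)

/-- The gaps met by `b`: the point `x ∈ b` lies in gap `g` when exactly `g` positive points outside
`b` precede it. The `- 1` discounts the point `0`, which lies outside every block. -/
def blockGaps (b : Finset ℕ) : Finset ℕ := b.image fun x => Nat.count (· ∉ b) x - 1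

variable {N c i x : ℕ} {b : Finset ℕ}

theorem outside_notMem (b : Finset ℕ) (i : ℕ) : outside b i ∉ b :=
  Nat.nth_mem_of_infinite (infinite_setOf_notMem b) i

theorem exists_outside_eq (hx : x ∉ b) : ∃ i, outside b i = x :=
  ⟨_, Nat.nth_count (p := (· ∉ b)) hx⟩

theorem count_outside (b : Finset ℕ) (i : ℕ) : Nat.count (· ∉ b) (outside b i) = i :=
  Nat.count_nth_of_infinite (infinite_setOf_notMem b) i

theorem lt_count_iff_outside_lt : i < Nat.count (· ∉ b) x ↔ outside b i < x :=
  Nat.lt_nth_iff_count_lt (infinite_setOf_notMem b)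

theorem count_outside_add_one (b : Finset ℕ) (i : ℕ) :
    Nat.count (· ∉ b) (outside b i + 1) = i + 1 := by
  rw [Nat.count_succ, if_pos (outside_notMem b i), count_outside]

theorem outside_add_one (h : outside b i + 1 ∉ b) : outside b (i + 1) = outside b i + 1 := by
  obtain ⟨j, hj⟩ := exists_outside_eq h
  have hij := count_outside_add_one b i
  rw [← hj, count_outside] at hij
  rw [← hij, hj]

theorem disjoint_map_outside (b q : Finset ℕ) : Disjoint b (q.map (outside b).toEmbedding) := by
  simp only [disjoint_right, mem_map, forall_exists_index, and_imp, RelEmbedding.coe_toEmbedding,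
    forall_apply_eq_imp_iff₂]
  exact fun i _ => outside_notMem b i

theorem exists_eq_map_outside {q : Finset ℕ} (h : Disjoint b q) :
    ∃ p : Finset ℕ, p.map (outside b).toEmbedding = q := by
  refine ⟨q.image (Nat.count (· ∉ b)), ?_⟩
  rw [map_eq_image, image_image]
  refine (image_congr fun x hx => ?_).trans image_id
  exact Nat.nth_count (disjoint_right.1 h hx)

theorem count_notMem_pos (h0 : 0 ∉ b) (hx : x ∈ b) : 0 < Nat.count (· ∉ b) x := by
  have hx0 : 0 < x := Nat.pos_of_ne_zero fun h => h0 (h ▸ hx)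
  exact (Nat.count_strict_mono (p := (· ∉ b)) h0 hx0).bot_lt

theorem mem_blockGaps (h0 : 0 ∉ b) {g : ℕ} : g ∈ blockGaps b ↔ outside b g + 1 ∈ b := by
  simp only [blockGaps, mem_image]
  constructor
  · rintro ⟨x, hx, rfl⟩
    have hpos := count_notMem_pos h0 hx
    set g := Nat.count (· ∉ b) x - 1
    by_contra hnot
    have hlt : outside b g < x := lt_count_iff_outside_lt.1 (by lia)
    have hge : x ≤ outside b (g + 1) := not_lt.1 fun h => by
      have := lt_count_iff_outside_lt.2 h
      lia
    rw [outside_add_one hnot] at hge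
    exact hnot (le_antisymm hge hlt ▸ hx)
  · exact fun h => ⟨_, h, by rw [count_outside_add_one, Nat.add_sub_cancel]⟩

theorem outside_add_one_mem_map_iff (h0 : 0 ∉ b) {q : Finset ℕ} :
    outside b i + 1 ∈ q.map (outside b).toEmbedding ↔ i + 1 ∈ q ∧ i ∉ blockGaps b := by
  rw [mem_blockGaps h0]
  by_cases h : outside b i + 1 ∈ b
  · simp [h, disjoint_left.1 (disjoint_map_outside b q) h]
  · simp [← outside_add_one h, outside_notMem]

theorem blockLoops_map_outside (h0 : 0 ∉ b) (q : Finset ℕ) :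
    blockLoops (q.map (outside b).toEmbedding) =
      (blockLoops q \ blockGaps b).map (outside b).toEmbedding := by
  simp only [blockLoops, filter_map, sdiff_eq_filter, filter_filter]
  congr 1
  exact filter_congr fun i _ => outside_add_one_mem_map_iff h0

theorem card_blockGaps_add_card_blockLoops (h0 : 0 ∉ b) : 
    #(blockGaps b) + #(blockLoops b) = #b := by
  have hpos : ∀ {x}, x ∈ b → 1 ≤ x := fun hx => Nat.one_le_iff_ne_zero.2 fun h => h0 (h ▸ hx)
  have hgaps : #(blockGaps b) = #{x ∈ b | x - 1 ∉ b} := by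
    refine card_nbij (outside b · + 1) ?_ ?_ ?_
    · intro g hg
      simpa [mem_blockGaps h0, outside_notMem] using hg
    · intro g _ g' _ h
      simpa using h
    · intro x hx
      obtain ⟨hxb, hx1⟩ := mem_filter.1 hx
      obtain ⟨g, hg⟩ := exists_outside_eq hx1
      have hgx : outside b g + 1 = x := by rw [hg, Nat.sub_add_cancel (hpos hxb)]
      exact ⟨g, (mem_blockGaps h0).2 (hgx ▸ hxb), hgx⟩
  have hloops : #(blockLoops b) = #{x ∈ b | x - 1 ∈ b} := by
    refine card_nbij (· + 1) ?_ ?_ ?_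
    · intro i hi
      simpa [blockLoops, and_comm] using hi
    · intro i _ j _ h
      simpa using h
    · intro x hx
      obtain ⟨hxb, hx1⟩ := mem_filter.1 hx
      have hx' := Nat.sub_add_cancel (hpos hxb)
      exact ⟨x - 1, mem_filter.2 ⟨hx1, hx'.symm ▸ hxb⟩, hx'⟩
  rw [hgaps, hloops, add_comm, card_filter_add_card_filter_not]

theorem count_notMem_add_one (hb : b ∈ powersetCard c (Icc 1 (N + c))) :
    Nat.count (· ∉ b) (N + c + 1) = N + 1 := by
  obtain ⟨hsub, hcard⟩ := mem_powersetCard.1 hb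
  have hrange : b ⊆ range (N + c + 1) := fun x hx => by
    have := mem_Icc.1 (hsub hx)
    exact mem_range.2 (by lia)
  rw [Nat.count_eq_card_filter_range, filter_notMem_eq_sdiff, card_sdiff_of_subset hrange,
    card_range, hcard]
  lia

theorem zero_notMem_of_mem_powersetCard (hb : b ∈ powersetCard c (Icc 1 N)) : 0 ∉ b := fun h => by
  simpa using (mem_powersetCard.1 hb).1 h

theorem outside_mem_Icc_iff (hb : b ∈ powersetCard c (Icc 1 (N + c))) :
    outside b i ∈ Icc 1 (N + c) ↔ i ∈ Icc 1 N := by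
  have hone : Nat.count (· ∉ b) 1 = 1 := by
    simp [Nat.count_succ, zero_notMem_of_mem_powersetCard hb]
  have hlow := lt_count_iff_outside_lt (b := b) (i := i) (x := 1)
  have hhigh := lt_count_iff_outside_lt (b := b) (i := i) (x := N + c + 1)
  rw [hone] at hlow
  rw [count_notMem_add_one hb] at hhigh
  simp only [mem_Icc]
  lia

theorem blockGaps_subset_range (hb : b ∈ powersetCard c (Icc 1 (N + c))) :
    blockGaps b ⊆ range (N + 1) := by
  intro g hg
  obtain ⟨x, hx, rfl⟩ := mem_image.1 hg
  have hx' := mem_Icc.1 ((mem_powersetCard.1 hb).1 hx)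
  have := Nat.count_monotone (· ∉ b) (show x ≤ N + c + 1 by lia)
  rw [count_notMem_add_one hb] at this
  exact mem_range.2 (by lia)

theorem blockGaps_insert_top (hb : b ∈ powersetCard c (Icc 1 (N + c))) :
    blockGaps (insert (N + c + 1) b) = insert N (blockGaps b) := by
  have hcount : ∀ x ≤ N + c + 1,
      Nat.count (· ∉ insert (N + c + 1) b) x = Nat.count (· ∉ b) x := fun x hx => by
    simp only [Nat.count_eq_card_filter_range]
    congr 1
    refine filter_congr fun y hy => ?_
    have := mem_range.1 hy
    simp only [mem_insert, not_or, and_iff_right_iff_imp]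
    lia
  unfold blockGaps
  rw [image_insert, hcount _ le_rfl, count_notMem_add_one hb, Nat.add_sub_cancel]
  congr 1
  refine image_congr fun x hx => ?_
  have := mem_Icc.1 ((mem_powersetCard.1 hb).1 hx)
  simp only [hcount x (by lia)]

theorem blockGaps_subset_range_of_top_notMem (hb : b ∈ powersetCard (c + 1) (Icc 1 (N + c))) :
    blockGaps b ⊆ range N := by
  cases N with
  | zero => simp [powersetCard_eq_empty.2] at hb
  | succ N =>
    rw [add_right_comm, add_assoc] at hb
    exact blockGaps_subset_range hb

theorem card_filter_blockGaps_eq_insert_top (N c : ℕ) (G : Finset ℕ) :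
    #{b ∈ powersetCard (c + 1) (Icc 1 (N + (c + 1))) | blockGaps b = G} =
      #{b ∈ powersetCard (c + 1) (Icc 1 (N + c)) | blockGaps b = G} +
        #{b ∈ powersetCard c (Icc 1 (N + c)) | insert N (blockGaps b) = G} := by
  rw [← add_assoc, ← insert_Icc_right_eq_Icc_add_one (by lia),
    card_filter_powersetCard_insert (by simp)]
  congr 2
  exact filter_congr fun b hb => by rw [blockGaps_insert_top hb]

theorem card_filter_insert_blockGaps_eq {G : Finset ℕ} (hN : N ∈ G) (s : Finset (Finset ℕ)) :
    #{b ∈ s | insert N (blockGaps b) = G} =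
      #{b ∈ s | blockGaps b = G} + #{b ∈ s | blockGaps b = G.erase N} := by
  rw [← card_union_of_disjoint, ← filter_or]
  · congr 1
    refine filter_congr fun b _ => ?_
    by_cases hb : N ∈ blockGaps b
    · have hne : blockGaps b ≠ G.erase N := fun h => notMem_erase N G (h ▸ hb)
      simp only [insert_eq_self.2 hb, hne, or_false]
    · have hne : blockGaps b ≠ G := fun h => hb (h ▸ hN)
      rw [eq_comm, ← erase_eq_iff_eq_insert hN hb, eq_comm]
      simp only [hne, false_or]
  · refine disjoint_filter.2 fun b _ hG hE => notMem_erase N G ?_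
    rwa [← hE, hG]

theorem card_filter_blockGaps_eq_of_mem {G : Finset ℕ} (hN : N ∈ G) (c : ℕ) :
    #{b ∈ powersetCard (c + 1) (Icc 1 (N + (c + 1))) | blockGaps b = G} =
      #{b ∈ powersetCard c (Icc 1 (N + c)) | blockGaps b = G} +
        #{b ∈ powersetCard c (Icc 1 (N + c)) | blockGaps b = G.erase N} := by
  have hnone : {b ∈ powersetCard (c + 1) (Icc 1 (N + c)) | blockGaps b = G} = ∅ := by
    refine filter_eq_empty_iff.2 fun b hb h => ?_
    exact notMem_range_self (blockGaps_subset_range_of_top_notMem hb (h ▸ hN))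
  rw [card_filter_blockGaps_eq_insert_top, hnone, card_empty, zero_add,
    card_filter_insert_blockGaps_eq hN]

theorem card_filter_blockGaps_eq_of_notMem {G : Finset ℕ} (hN : N ∉ G) (c : ℕ) :
    #{b ∈ powersetCard (c + 1) (Icc 1 (N + (c + 1))) | blockGaps b = G} =
      #{b ∈ powersetCard (c + 1) (Icc 1 (N + c)) | blockGaps b = G} := by
  have hnone : {b ∈ powersetCard c (Icc 1 (N + c)) | insert N (blockGaps b) = G} = ∅ :=
    filter_eq_empty_iff.2 fun b _ h => hN (h ▸ mem_insert_self ..)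
  rw [card_filter_blockGaps_eq_insert_top, hnone, card_empty, add_zero]

theorem filter_blockGaps_eq_eq_empty {G : Finset ℕ} (hG : c < #G) (s : Finset ℕ) :
    {b ∈ powersetCard c s | blockGaps b = G} = ∅ := by
  refine filter_eq_empty_iff.2 fun b hb h => hG.not_ge ?_
  rw [← h, ← (mem_powersetCard.1 hb).2]
  exact card_image_le

theorem card_filter_blockGaps_eq (N c l : ℕ) {G : Finset ℕ} (hG : G ⊆ range (N + 1))
    (hc : #G + l = c) :
    #{b ∈ powersetCard c (Icc 1 (N + c)) | blockGaps b = G} = (c - 1).choose l := by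
  induction hn : N + c generalizing N c l G with
  | zero =>
    obtain ⟨rfl, hG0, rfl⟩ : c = 0 ∧ #G = 0 ∧ l = 0 := by lia
    rw [card_eq_zero.1 hG0]
    rfl
  | succ n ih =>
    rw [← hn]
    rcases c with - | c
    · obtain ⟨hG0, rfl⟩ : #G = 0 ∧ l = 0 := by lia
      rw [card_eq_zero.1 hG0, powersetCard_zero]
      rfl
    obtain rfl : n = N + c := by lia
    by_cases hN : N ∈ G
    · have hE := card_erase_add_one hN
      have ihE := ih N c l ((erase_subset N G).trans hG) (by lia) rfl
      rw [card_filter_blockGaps_eq_of_mem hN, ihE]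
      rcases l with - | l
      · rw [filter_blockGaps_eq_eq_empty (by lia), Nat.choose_zero_right, Nat.choose_zero_right]
        rfl
      · obtain ⟨c, rfl⟩ : ∃ c', c = c' + 1 := ⟨c - 1, by lia⟩
        rw [ih N (c + 1) l hG (by lia) rfl]
        rfl
    · rw [card_filter_blockGaps_eq_of_notMem hN]
      rw [range_add_one, subset_insert_iff_of_notMem hN] at hG
      rcases N with - | N
      · obtain rfl : l = c + 1 := by rw [subset_empty.1 hG] at hc; simpa using hc
        rw [powersetCard_eq_empty.2 (by simp), Nat.add_sub_cancel, Nat.choose_succ_self]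
        rfl
      · exact ih N (c + 1) l hG hc (by lia)

theorem sum_powersetCard_blockLoops_blockGaps (N c : ℕ) (f : ℕ → Finset ℕ → ℕ) :
    ∑ b ∈ powersetCard c (Icc 1 (N + c)), f #(blockLoops b) (blockGaps b) =
      ∑ k ∈ range (c + 1), (c - 1).choose k *
        ∑ G ∈ powersetCard (c - k) (range (N + 1)), f k G := by
  have hcard : ∀ b ∈ powersetCard c (Icc 1 (N + c)), #(blockGaps b) + #(blockLoops b) = c :=
    fun b hb => by
      rw [card_blockGaps_add_card_blockLoops (zero_notMem_of_mem_powersetCard hb),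
        (mem_powersetCard.1 hb).2]
  have hloops : ∀ b ∈ powersetCard c (Icc 1 (N + c)), #(blockLoops b) ∈ range (c + 1) :=
    fun b hb => mem_range_succ_iff.2 (by have := hcard b hb; lia)
  rw [← sum_fiberwise_of_maps_to hloops]
  refine sum_congr rfl fun k hk => ?_
  have hgaps : ∀ b ∈ {b ∈ powersetCard c (Icc 1 (N + c)) | #(blockLoops b) = k},
      blockGaps b ∈ powersetCard (c - k) (range (N + 1)) := fun b hb => by
    obtain ⟨hb, hbk⟩ := mem_filter.1 hb
    have := hcard b hb
    exact mem_powersetCard.2 ⟨blockGaps_subset_range hb, by lia⟩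
  rw [← sum_fiberwise_of_maps_to hgaps, mul_sum]
  refine sum_congr rfl fun G hG => ?_
  obtain ⟨hGN, hGk⟩ := mem_powersetCard.1 hG
  rw [filter_filter, ← card_filter_blockGaps_eq N c k hGN (by have := mem_range.1 hk; lia),
    ← smul_eq_mul]
  have hfiber : ∀ b ∈ powersetCard c (Icc 1 (N + c)),
      (#(blockLoops b) = k ∧ blockGaps b = G) ↔ blockGaps b = G := fun b hb => by
    have := hcard b hb
    have := mem_range.1 hk
    refine and_iff_right_of_imp ?_
    rintro rfl
    lia
  rw [← filter_congr hfiber]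
  refine sum_eq_card_nsmul fun b hb => ?_
  obtain ⟨-, rfl, rfl⟩ := mem_filter.1 hb
  rfl

end Blocks

section Diagrams

open Classical in
/-- The finite set of all generalized linear diagrams on `1,…,N` with blocks of size `d`. -/
noncomputable def linearDiagrams (N d : ℕ) : Finset (Finset (Finset ℕ)) :=
  {P ∈ (Icc 1 N).powerset.powerset | IsLinearDiagram N d P}

/-- The loops of the diagram `P`. -/
def diagramLoops (P : Finset (Finset ℕ)) : Finset ℕ := P.biUnion blockLoops

/-- The diagram obtained from `Q` by adding the block `b` and moving the points of `Q` to the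
points outside `b`, in increasing order. -/
noncomputable def insertBlock (b : Finset ℕ) (Q : Finset (Finset ℕ)) : Finset (Finset ℕ) :=
  insert b (Q.image fun q => q.map (outside b).toEmbedding)

variable {N d i x : ℕ} {b : Finset ℕ} {P Q : Finset (Finset ℕ)}

theorem mem_linearDiagrams : P ∈ linearDiagrams N d ↔ IsLinearDiagram N d P := by
  simp only [linearDiagrams, mem_filter, and_iff_right_iff_imp]
  exact fun h => mem_powerset.2 fun b hb => mem_powerset.2 (h.2.1 b hb)

namespace IsLinearDiagram

theorem mem_powersetCard (h : IsLinearDiagram N d P) (hb : b ∈ P) : b ∈ powersetCard d (Icc 1 N) :=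
  Finset.mem_powersetCard.2 ⟨h.2.1 b hb, h.1 b hb⟩

theorem pairwiseDisjoint (h : IsLinearDiagram N d P) :
    (P : Set (Finset ℕ)).PairwiseDisjoint id := fun _ hb _ hc hbc =>
  disjoint_left.2 fun _ hxb hxc => hbc <|
    (h.2.2 _ (h.2.1 _ hb _ hxb)).unique ⟨hb, hxb⟩ ⟨hc, hxc⟩

theorem card_diagramLoops (h : IsLinearDiagram N d P) :
    #(diagramLoops P) = ∑ b ∈ P, #(blockLoops b) :=
  card_biUnion fun _ hb _ hc hbc =>
    disjoint_filter_filter (h.pairwiseDisjoint hb hc hbc)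

theorem linLoops_eq_card_diagramLoops (h : IsLinearDiagram N d P) :
    linLoops N P = #(diagramLoops P) := by
  rw [linLoops, ← Set.ncard_coe_finset]
  congr 1
  ext i
  simp only [diagramLoops, blockLoops, coe_biUnion, mem_coe, coe_filter, Set.mem_iUnion,
    Set.mem_ofPred_eq, exists_prop]
  refine ⟨fun hi => hi.2.2, fun ⟨b, hb, hi, hi'⟩ => ⟨?_, ?_, b, hb, hi, hi'⟩⟩
  · exact (mem_Icc.1 (h.2.1 b hb _ hi)).1
  · exact (mem_Icc.1 (h.2.1 b hb _ hi')).2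

end IsLinearDiagram

theorem disjoint_of_mem_image_map_outside {c : Finset ℕ}
    (hc : c ∈ Q.image fun q => q.map (outside b).toEmbedding) : Disjoint b c := by
  obtain ⟨q, -, rfl⟩ := mem_image.1 hc
  exact disjoint_map_outside b q

theorem existsUnique_mem_insertBlock_of_mem (hx : x ∈ b) :
    ∃! c, c ∈ insertBlock b Q ∧ x ∈ c := by
  refine ⟨b, ⟨mem_insert_self .., hx⟩, fun c ⟨hc, hxc⟩ => ?_⟩
  refine (mem_insert.1 hc).resolve_right fun hc => ?_
  exact disjoint_left.1 (disjoint_of_mem_image_map_outside hc) hx hxc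

theorem mem_insertBlock_and_outside_mem_iff {c : Finset ℕ} :
    c ∈ insertBlock b Q ∧ outside b i ∈ c ↔
      ∃ q, (q ∈ Q ∧ i ∈ q) ∧ q.map (outside b).toEmbedding = c := by
  simp only [insertBlock, mem_insert, mem_image]
  constructor
  · rintro ⟨rfl | ⟨q, hq, rfl⟩, hi⟩
    · exact absurd hi (outside_notMem c i)
    · exact ⟨q, ⟨hq, (mem_map' _).1 hi⟩, rfl⟩
  · rintro ⟨q, ⟨hq, hi⟩, rfl⟩
    exact ⟨.inr ⟨q, hq, rfl⟩, (mem_map' _).2 hi⟩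

theorem existsUnique_mem_insertBlock_iff :
    (∃! c, c ∈ insertBlock b Q ∧ outside b i ∈ c) ↔ ∃! q, q ∈ Q ∧ i ∈ q := by
  simp only [mem_insertBlock_and_outside_mem_iff]
  constructor
  · rintro ⟨_, ⟨q, hq, rfl⟩, huniq⟩
    exact ⟨q, hq, fun r hr => map_injective _ (huniq _ ⟨r, hr, rfl⟩)⟩
  · rintro ⟨q, hq, huniq⟩
    exact ⟨_, ⟨q, hq, rfl⟩, fun _ ⟨r, hr, hrc⟩ => by rw [← hrc, huniq r hr]⟩

theorem isLinearDiagram_insertBlock_iff (hb : b ∈ powersetCard d (Icc 1 (N + d))) :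
    IsLinearDiagram (N + d) d (insertBlock b Q) ↔ IsLinearDiagram N d Q := by
  have houtside : ∀ {i}, outside b i ∈ Icc 1 (N + d) ↔ i ∈ Icc 1 N := outside_mem_Icc_iff hb
  obtain ⟨hsub, hcard⟩ := mem_powersetCard.1 hb
  unfold IsLinearDiagram
  refine and_congr ?_ (and_congr ?_ ?_)
  · simp [insertBlock, hcard]
  · have hmap : ∀ q : Finset ℕ, (∀ x ∈ q.map (outside b).toEmbedding, x ∈ Icc 1 (N + d)) ↔
        ∀ i ∈ q, i ∈ Icc 1 N := fun q => by
      simp only [forall_mem_map, RelEmbedding.coe_toEmbedding, houtside]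
    simp only [insertBlock, forall_mem_insert, forall_mem_image, hmap]
    exact and_iff_right hsub
  · refine ⟨fun h i hi => existsUnique_mem_insertBlock_iff.1 (h _ (houtside.2 hi)),
      fun h x hx => ?_⟩
    by_cases hxb : x ∈ b
    · exact existsUnique_mem_insertBlock_of_mem hxb
    · obtain ⟨i, rfl⟩ := exists_outside_eq hxb
      exact existsUnique_mem_insertBlock_iff.2 (h i (houtside.1 hx))

theorem insertBlock_injective (hb : b.Nonempty) : Function.Injective (insertBlock b) := by
  have hnotMem : ∀ Q : Finset (Finset ℕ), b ∉ Q.image fun q => q.map (outside b).toEmbedding :=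
    fun Q h => hb.ne_empty (disjoint_self.1 (disjoint_of_mem_image_map_outside h))
  intro Q Q' h
  refine image_injective (map_injective (outside b).toEmbedding) ?_
  rw [← erase_insert (hnotMem Q), ← erase_insert (hnotMem Q')]
  exact congrArg (fun P => P.erase b) h

theorem exists_insertBlock_eq (h : IsLinearDiagram N d P) (hb : b ∈ P) :
    ∃ Q, insertBlock b Q = P := by
  have hrange : (P.erase b : Set (Finset ℕ)) ⊆
      (fun q : Finset ℕ => q.map (outside b).toEmbedding) '' Set.univ := fun c hc => by
    obtain ⟨hcb, hc⟩ := mem_erase.1 hc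
    obtain ⟨q, rfl⟩ := exists_eq_map_outside (h.pairwiseDisjoint hb hc hcb.symm)
    exact ⟨q, Set.mem_univ q, rfl⟩
  obtain ⟨Q, -, hQ⟩ := subset_set_image_iff.1 hrange
  exact ⟨Q, by rw [insertBlock, hQ, insert_erase hb]⟩

theorem image_insertBlock_linearDiagrams (hb : b ∈ powersetCard d (Icc 1 (N + d))) :
    (linearDiagrams N d).image (insertBlock b) = {P ∈ linearDiagrams (N + d) d | b ∈ P} := by
  ext P
  simp only [mem_image, mem_filter, mem_linearDiagrams]
  constructor
  · rintro ⟨Q, hQ, rfl⟩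
    exact ⟨(isLinearDiagram_insertBlock_iff hb).2 hQ, mem_insert_self ..⟩
  · rintro ⟨hP, hbP⟩
    obtain ⟨Q, rfl⟩ := exists_insertBlock_eq hP hbP
    exact ⟨Q, (isLinearDiagram_insertBlock_iff hb).1 hP, rfl⟩

theorem sum_linearDiagrams_sum_blocks (hd : 0 < d) (N : ℕ)
    (f : Finset (Finset ℕ) → Finset ℕ → ℕ) :
    ∑ P ∈ linearDiagrams (N + d) d, ∑ b ∈ P, f P b =
      ∑ Q ∈ linearDiagrams N d, ∑ b ∈ powersetCard d (Icc 1 (N + d)), f (insertBlock b Q) b := by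
  rw [sum_comm' (t' := powersetCard d (Icc 1 (N + d)))
    (s' := fun b => {P ∈ linearDiagrams (N + d) d | b ∈ P}), sum_comm]
  · refine sum_congr rfl fun b hb => ?_
    have hne : b.Nonempty := card_pos.1 ((mem_powersetCard.1 hb).2 ▸ hd)
    rw [← image_insertBlock_linearDiagrams hb, sum_image (insertBlock_injective hne).injOn]
  · simp only [mem_filter, mem_linearDiagrams]
    exact fun P b => ⟨fun h => ⟨h, h.1.mem_powersetCard h.2⟩, fun h => h.1⟩

theorem card_diagramLoops_insertBlock (h0 : 0 ∉ b) (Q : Finset (Finset ℕ)) :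
    #(diagramLoops (insertBlock b Q)) = #(blockLoops b) + #(diagramLoops Q \ blockGaps b) := by
  have hloops : diagramLoops (insertBlock b Q) =
      blockLoops b ∪ (diagramLoops Q \ blockGaps b).map (outside b).toEmbedding := by
    simp only [diagramLoops, insertBlock, biUnion_insert, image_biUnion, blockLoops_map_outside h0]
    congr 1
    ext x
    simp only [mem_biUnion, mem_map, mem_sdiff]
    grind
  rw [hloops, card_union_of_disjoint, card_map]
  exact (disjoint_map_outside b _).mono_left (filter_subset _ _)

theorem IsLinearDiagram.diagramLoops_subset_range (h : IsLinearDiagram N d P) :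
    diagramLoops P ⊆ range (N + 1) := fun i hi => by
  obtain ⟨b, hb, hi⟩ := mem_biUnion.1 hi
  have := mem_Icc.1 (h.2.1 b hb i (mem_filter.1 hi).1)
  exact mem_range.2 (by lia)

/-- The loop-counting form of deleting a block `b` from a diagram: `k` is the number of loops of
`b`, and `s` the number of loops of the remaining diagram that `b` breaks. -/
theorem sum_linearDiagrams_sum_card_loops (hd : 0 < d) (N : ℕ) (F : ℕ → ℕ → ℕ) :
    ∑ P ∈ linearDiagrams (N + d) d, ∑ b ∈ P, F #(blockLoops b) #(diagramLoops P) =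
      ∑ Q ∈ linearDiagrams N d, ∑ k ∈ range (d + 1), (d - 1).choose k *
        ∑ s ∈ range (#(diagramLoops Q) + 1), (#(diagramLoops Q)).choose s *
          iChoose (N + 1 - #(diagramLoops Q)) (d - k - s) * F k (k + (#(diagramLoops Q) - s)) := by
  rw [sum_linearDiagrams_sum_blocks hd]
  refine sum_congr rfl fun Q hQ => ?_
  have hsub := (mem_linearDiagrams.1 hQ).diagramLoops_subset_range
  have hloops : ∀ b ∈ powersetCard d (Icc 1 (N + d)), #(diagramLoops (insertBlock b Q)) =
      #(blockLoops b) + (#(diagramLoops Q) - #(diagramLoops Q ∩ blockGaps b)) := fun b hb => by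
    rw [card_diagramLoops_insertBlock (zero_notMem_of_mem_powersetCard hb), card_sdiff, inter_comm]
  rw [sum_congr rfl fun b hb => congrArg (F _) (hloops b hb),
    sum_powersetCard_blockLoops_blockGaps N d
      fun k G => F k (k + (#(diagramLoops Q) - #(diagramLoops Q ∩ G)))]
  refine sum_congr rfl fun k hk => ?_
  rw [sum_powersetCard_card_inter hsub _ fun s => F k (k + (#(diagramLoops Q) - s)), card_range,
    Nat.cast_sub (mem_range_succ_iff.1 hk)]
  push_cast
  rfl

end Diagrams

section TwoLoops

/-- The diagrams with exactly two loops, lying in distinct blocks: with two loops in total, this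
says that every block has at most one. -/
noncomputable def twoLoopDiagrams (N d : ℕ) : Finset (Finset (Finset ℕ)) :=
  {P ∈ linearDiagrams N d | #(diagramLoops P) = 2 ∧ ∀ b ∈ P, #(blockLoops b) ≤ 1}

variable {N d : ℕ} {P : Finset (Finset ℕ)}

theorem card_filter_eq_one_of_sum_eq_two {ι : Type*} {s : Finset ι} {g : ι → ℕ}
    (h : ∑ i ∈ s, g i = 2) :
    #{i ∈ s | g i = 1} = if ∀ i ∈ s, g i ≤ 1 then 2 else 0 := by
  split_ifs with hle
  · rw [card_filter, ← h]
    refine sum_congr rfl fun i hi => ?_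
    have := hle i hi
    split_ifs <;> lia
  · push Not at hle
    obtain ⟨i, hi, hgi⟩ := hle
    refine card_eq_zero.2 (filter_eq_empty_iff.2 fun j hj hgj => ?_)
    have hij : i ≠ j := by rintro rfl; lia
    have := add_le_sum (f := g) (fun _ _ => Nat.zero_le _) hi hj hij
    lia

theorem IsLinearDiagram.forall_loops_mem_iff (h : IsLinearDiagram N d P) {b : Finset ℕ} :
    (∀ i, 1 ≤ i → i + 1 ≤ N → (∃ c ∈ P, i ∈ c ∧ i + 1 ∈ c) → i ∈ b ∧ i + 1 ∈ b) ↔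
      diagramLoops P ⊆ blockLoops b := by
  simp only [subset_iff, diagramLoops, mem_biUnion, blockLoops, mem_filter]
  refine ⟨fun hb i ⟨c, hc, hi, hi'⟩ => hb i ?_ ?_ ⟨c, hc, hi, hi'⟩, fun hb i _ _ => @hb i⟩
  · exact (mem_Icc.1 (h.2.1 c hc _ hi)).1
  · exact (mem_Icc.1 (h.2.1 c hc _ hi')).2

theorem not_exists_diagramLoops_subset_iff (h : #(diagramLoops P) = 2) :
    (¬∃ b ∈ P, diagramLoops P ⊆ blockLoops b) ↔ ∀ b ∈ P, #(blockLoops b) ≤ 1 := by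
  push Not
  refine forall₂_congr fun b hb => ?_
  have hsub : blockLoops b ⊆ diagramLoops P := subset_biUnion_of_mem blockLoops hb
  have hle := h ▸ card_le_card hsub
  constructor
  · intro hnot
    have := card_lt_card ⟨hsub, hnot⟩
    lia
  · intro hone hsup
    have := card_le_card hsup
    lia

theorem ncard_eq_card_twoLoopDiagrams (N d : ℕ) :
    Set.ncard {P : Finset (Finset ℕ) | IsLinearDiagram N d P ∧ linLoops N P = 2 ∧
        ¬∃ b ∈ P, ∀ i : ℕ, 1 ≤ i → i + 1 ≤ N →
          (∃ c ∈ P, i ∈ c ∧ i + 1 ∈ c) → i ∈ b ∧ i + 1 ∈ b} =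
      #(twoLoopDiagrams N d) := by
  rw [← Set.ncard_coe_finset]
  congr 1
  ext P
  simp only [twoLoopDiagrams, coe_filter, Set.mem_ofPred_eq, mem_linearDiagrams]
  refine and_congr_right fun h => ?_
  rw [h.linLoops_eq_card_diagramLoops]
  refine and_congr_right fun h2 => ?_
  simp only [h.forall_loops_mem_iff, not_exists_diagramLoops_subset_iff h2]

theorem two_mul_card_twoLoopDiagrams (N d : ℕ) :
    2 * #(twoLoopDiagrams N d) =
      ∑ P ∈ linearDiagrams N d, ∑ b ∈ P,
        if #(blockLoops b) = 1 ∧ #(diagramLoops P) = 2 then 1 else 0 := by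
  rw [twoLoopDiagrams, card_filter, mul_sum]
  refine sum_congr rfl fun P hP => ?_
  by_cases h2 : #(diagramLoops P) = 2
  · have hsum := h2
    rw [(mem_linearDiagrams.1 hP).card_diagramLoops] at hsum
    simp only [h2, true_and, and_true, ← card_filter, card_filter_eq_one_of_sum_eq_two hsum,
      mul_ite, mul_one, mul_zero]
  · simp [h2]

theorem two_mul_card_twoLoopDiagrams_add (hd : 0 < d) (N : ℕ) :
    2 * #(twoLoopDiagrams (N + d) d) =
      (d - 1) * ∑ Q ∈ linearDiagrams N d,
        #(diagramLoops Q) * iChoose (N + 1 - #(diagramLoops Q)) (d - #(diagramLoops Q)) := by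
  rw [two_mul_card_twoLoopDiagrams,
    sum_linearDiagrams_sum_card_loops hd N fun k M => if k = 1 ∧ M = 2 then 1 else 0, mul_sum]
  refine sum_congr rfl fun Q _ => ?_
  generalize #(diagramLoops Q) = m
  rw [sum_eq_single_of_mem 1 (by simp [hd]) fun k _ hk => by simp [hk], Nat.choose_one_right]
  congr 1
  rcases m with - | m
  · simp
  rw [sum_eq_single_of_mem m (by simp) fun s hs hsm => ?_, Nat.choose_succ_self_right]
  · simp [add_comm, sub_sub]
  · have := mem_range_succ_iff.1 hs
    rw [if_neg (by lia), mul_zero]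

theorem sum_card_diagramLoops_mul (hd : 2 ≤ d) (N : ℕ) (h : ℕ → ℕ) :
    ∑ P ∈ linearDiagrams (N + d) d, #(diagramLoops P) * h #(diagramLoops P) =
      (d - 1) * ∑ Q ∈ linearDiagrams N d, ∑ j ∈ range (d - 1),
        ∑ s ∈ range (min #(diagramLoops Q) (d - 1 - j) + 1),
          (d - 2).choose j * (#(diagramLoops Q)).choose s *
            iChoose (N + 1 - #(diagramLoops Q)) (d - 1 - j - s) *
            h (j + 1 + (#(diagramLoops Q) - s)) := by
  have hmark : ∀ P ∈ linearDiagrams (N + d) d, #(diagramLoops P) * h #(diagramLoops P) =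
      ∑ b ∈ P, #(blockLoops b) * h #(diagramLoops P) := fun P hP => by
    rw [← sum_mul, ← (mem_linearDiagrams.1 hP).card_diagramLoops]
  rw [sum_congr rfl hmark, sum_linearDiagrams_sum_card_loops (by lia) N fun k M => k * h M,
    mul_sum]
  refine sum_congr rfl fun Q _ => ?_
  generalize #(diagramLoops Q) = m
  obtain ⟨e, rfl⟩ : ∃ e, d = e + 2 := ⟨d - 2, by lia⟩
  have hlast : (e + 2 - 1).choose (e + 2) = 0 := Nat.choose_succ_self _
  rw [sum_range_succ, sum_range_succ', hlast]
  simp only [zero_mul, mul_zero, sum_const_zero, add_zero]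
  rw [mul_sum]
  refine sum_congr rfl fun j _ => ?_
  have hrange : range (min m (e + 2 - 1 - j) + 1) ⊆ range (m + 1) :=
    range_subset_range.2 (by lia)
  rw [sum_subset hrange fun s hs hs' => ?_, mul_sum, mul_sum]
  · refine sum_congr rfl fun s _ => ?_
    have harg : ((e + 2 : ℕ) : ℤ) - (j + 1 : ℕ) - s = (e + 2 : ℕ) - 1 - j - s := by
      push_cast
      ring
    have habsorb : (e + 1) * e.choose j = (e + 1).choose (j + 1) * (j + 1) :=
      Nat.add_one_mul_choose_eq e j
    rw [harg, show e + 2 - 1 = e + 1 from rfl, Nat.add_sub_cancel]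
    linear_combination m.choose s * iChoose (N + 1 - m) ((e + 2 : ℕ) - 1 - j - s) *
      h (j + 1 + (m - s)) * habsorb.symm
  · rw [mem_range] at hs hs'
    rw [iChoose_of_neg _ (by lia), mul_zero, zero_mul]

/-- The number of ways, up to the factor `(d - 1) ^ 2`, to insert two blocks of size `d` into a
diagram on `1,…,N` with `m` loops: first a block with `j + 1` loops, one of them marked, that
breaks `s` of the `m` old loops, then a block with one loop that breaks all but the marked one. -/
def twoBlockWeight (d N m : ℕ) : ℕ :=
  ∑ j ∈ range (d - 1), ∑ s ∈ range (min m (d - 1 - j) + 1),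
    (d - 2).choose j * m.choose s * iChoose (N + 1 - m) (d - 1 - j - s) *
      iChoose (N + d - m - j + s) (d - 1 - m - j + s)

theorem twoBlockWeight_eq_zero {m : ℕ} (hm : 2 * d - 1 ≤ m) (N : ℕ) :
    twoBlockWeight d N m = 0 := by
  refine sum_eq_zero fun j hj => sum_eq_zero fun s hs => ?_
  rw [mem_range] at hj hs
  rw [iChoose_of_neg (y := d - 1 - m - j + s) _ (by lia), mul_zero]

theorem two_mul_card_twoLoopDiagrams_add_add (hd : 2 ≤ d) (N : ℕ) :
    2 * #(twoLoopDiagrams (N + d + d) d) =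
      (d - 1) ^ 2 * ∑ Q ∈ linearDiagrams N d, twoBlockWeight d N #(diagramLoops Q) := by
  rw [two_mul_card_twoLoopDiagrams_add (by lia),
    sum_card_diagramLoops_mul hd N fun M => iChoose ((N + d : ℕ) + 1 - M) (d - M), ← mul_assoc,
    ← sq]
  congr 1
  refine sum_congr rfl fun Q _ => sum_congr rfl fun j _ => sum_congr rfl fun s hs => ?_
  generalize #(diagramLoops Q) = m at hs ⊢
  have hsm : s ≤ m := by
    have := mem_range.1 hs
    lia
  congr 2 <;> push_cast [hsm] <;> ring

theorem sum_linearDiagrams_eq_sum_numA (n d : ℕ) {K : ℕ} {f : ℕ → ℕ} (hf : ∀ m ≥ K, f m = 0) :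
    ∑ Q ∈ linearDiagrams (n * d) d, f #(diagramLoops Q) = ∑ m ∈ range K, f m * numA d n m := by
  have hnumA : ∀ m, numA d n m = #{Q ∈ linearDiagrams (n * d) d | #(diagramLoops Q) = m} := by
    intro m
    rw [numA, ← Set.ncard_coe_finset]
    congr 1
    ext Q
    simp only [coe_filter, Set.mem_ofPred_eq, mem_linearDiagrams]
    exact and_congr_right fun h => by rw [h.linLoops_eq_card_diagramLoops]
  have hsupp : ∀ Q ∈ linearDiagrams (n * d) d, f #(diagramLoops Q) ≠ 0 →
      #(diagramLoops Q) < K := fun Q _ hQ => not_le.1 fun h => hQ (hf _ h)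
  rw [← sum_filter_of_ne hsupp,
    ← sum_fiberwise_of_maps_to (g := fun Q => #(diagramLoops Q)) (t := range K) (by simp)]
  refine sum_congr rfl fun m hm => ?_
  have hfiber : {Q ∈ linearDiagrams (n * d) d | #(diagramLoops Q) < K ∧ #(diagramLoops Q) = m} =
      {Q ∈ linearDiagrams (n * d) d | #(diagramLoops Q) = m} :=
    filter_congr fun Q _ => and_iff_right_of_imp fun h => h ▸ mem_range.1 hm
  rw [filter_filter, hfiber, hnumA, mul_comm (f m), ← smul_eq_mul]
  refine sum_eq_card_nsmul fun Q hQ => ?_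
  rw [(mem_filter.1 hQ).2]

end TwoLoops

theorem linear_two_blocks_loops_general (d n : ℕ) (hd : 2 ≤ d) (hn : 2 ≤ n) :
    2 * Set.ncard {P : Finset (Finset ℕ) |
        IsLinearDiagram (n * d) d P ∧ linLoops (n * d) P = 2 ∧
          ¬∃ b ∈ P, ∀ i : ℕ, 1 ≤ i → i + 1 ≤ n * d →
            (∃ c ∈ P, i ∈ c ∧ i + 1 ∈ c) → i ∈ b ∧ i + 1 ∈ b} =
      (d - 1) ^ 2 * ∑ m ∈ range (2 * d - 1), ∑ j ∈ range (d - 1),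
        ∑ s ∈ range (min m (d - 1 - j) + 1),
          (d - 2).choose j * m.choose s *
            iChoose (d * ((n : ℤ) - 2) + 1 - m) (d - 1 - j - s) *
            iChoose (d * ((n : ℤ) - 2) + d - m - j + s) (d - 1 - m - j + s) *
            numA d (n - 2) m := by
  obtain ⟨n, rfl⟩ : ∃ n', n = n' + 2 := ⟨n - 2, by lia⟩
  have hN : ((n * d : ℕ) : ℤ) = d * ((n + 2 : ℕ) - 2) := by
    push_cast
    ring
  rw [ncard_eq_card_twoLoopDiagrams, show (n + 2) * d = n * d + d + d by ring,
    two_mul_card_twoLoopDiagrams_add_add hd,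
    sum_linearDiagrams_eq_sum_numA n d fun m hm => twoBlockWeight_eq_zero hm (n * d)]
  simp only [twoBlockWeight, hN, sum_mul, Nat.add_sub_cancel]

/-- for `d = 3` and `n ≥ 2`, the number of generalized linear diagrams of
order `(n,3)` with exactly `2` loops lying in two distinct blocks. -/
theorem linear_two_blocks_loops (n : ℕ) (hn : 2 ≤ n) :
    Set.ncard {P : Finset (Finset ℕ) |
        IsLinearDiagram (n * 3) 3 P ∧ linLoops (n * 3) P = 2 ∧
          ¬∃ b ∈ P, ∀ i : ℕ, 1 ≤ i → i + 1 ≤ n * 3 →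
            (∃ c ∈ P, i ∈ c ∧ i + 1 ∈ c) → i ∈ b ∧ i + 1 ∈ b} =
      2 * ∑ m ∈ Finset.range 5, ∑ j ∈ Finset.range 2,
            ∑ s ∈ Finset.range (min m (2 - j) + 1),
              m.choose s *
                iChoose (3 * ((n : ℤ) - 2) + 1 - (m : ℤ)) (2 - (j : ℤ) - (s : ℤ)) *
                iChoose (3 * ((n : ℤ) - 2) + 3 - (m : ℤ) - (j : ℤ) + (s : ℤ))
                  (2 - (m : ℤ) - (j : ℤ) + (s : ℤ)) *
                numA 3 (n - 2) m := by
  have hchoose : ∀ j ∈ range 2, Nat.choose (3 - 2) j = 1 := by decide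
  have hcast : ((3 : ℕ) : ℤ) - 1 = 2 := rfl
  have h := linear_two_blocks_loops_general 3 n (by lia) hn
  refine Nat.eq_of_mul_eq_mul_left two_pos (h.trans ?_)
  rw [← mul_assoc]
  refine congrArg (4 * ·) (sum_congr rfl fun m _ => sum_congr rfl fun j hj =>
    sum_congr rfl fun s _ => ?_)
  rw [hchoose j hj, one_mul, hcast, Nat.cast_ofNat]
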